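/- Let ε > 0 and K > 0, and let (x_n)_{n≥1} be a sequence of complex numbers with |x_n| ≤ K n^{1/2−ε} for all n ≥ 1. Then there exist a constant C > 0 and an index N such that for all n ≥ N, |(1 + x_n/n)^n − exp(x_n)| ≤ C n^{−ε} |exp(x_n)|. -/

import Mathlib

open Filter Topology

/-- Quantitative comparison of `(1 + x / n) ^ n` with `exp x` for `x = O(√n)`. -/
lemma norm_one_add_div_pow_sub_exp_le {n : ℕ} (hn : n ≠ 0) {x : ℂ}
    (hx : ‖x‖ ≤ n / 2) (hx2 : ‖x‖ ^ 2 ≤ n) :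
    ‖(1 + x / (n : ℂ)) ^ n - Complex.exp x‖ ≤ 2 * (‖x‖ ^ 2 / n) * ‖Complex.exp x‖ := by
  have hn0 : (0 : ℝ) < n := by positivity
  have hnC : (n : ℂ) ≠ 0 := by exact_mod_cast hn
  set z : ℂ := x / n with hz
  have hxz : x = n * z := by rw [hz]; field_simp
  have hznorm : ‖z‖ = ‖x‖ / n := by simp [hz]
  have hz2 : ‖z‖ ≤ 1 / 2 := by rw [hznorm, div_le_iff₀ hn0]; linarith
  have hlog : ‖Complex.log (1 + z) - z‖ ≤ ‖z‖ ^ 2 := by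
    refine (Complex.norm_log_one_add_sub_self_le (by linarith)).trans ?_
    have hinv : (1 - ‖z‖)⁻¹ ≤ 2 := inv_le_of_inv_le₀ (by norm_num) (by linarith)
    nlinarith [sq_nonneg ‖z‖]
  have hne : 1 + z ≠ 0 := by
    intro h
    have hz1 : z = -1 := by linear_combination h
    norm_num [hz1] at hz2
  set w : ℂ := n * (Complex.log (1 + z) - z) with hw
  have hwnorm : ‖w‖ ≤ ‖x‖ ^ 2 / n := by
    calc ‖w‖ = n * ‖Complex.log (1 + z) - z‖ := by simp [hw]
      _ ≤ n * ‖z‖ ^ 2 := by gcongr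
      _ = ‖x‖ ^ 2 / n := by rw [hznorm]; field_simp
  have hw1 : ‖w‖ ≤ 1 := hwnorm.trans ((div_le_one hn0).2 hx2)
  have hpow : (1 + z) ^ n = Complex.exp w * Complex.exp x := by
    rw [← Complex.exp_add, hw, hxz, ← mul_add, sub_add_cancel, Complex.exp_nat_mul,
      Complex.exp_log hne]
  calc ‖(1 + z) ^ n - Complex.exp x‖ = ‖Complex.exp w - 1‖ * ‖Complex.exp x‖ := by
        rw [hpow, ← norm_mul, sub_mul, one_mul]
    _ ≤ 2 * (‖x‖ ^ 2 / n) * ‖Complex.exp x‖ := by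
        gcongr
        exact (Complex.norm_exp_sub_one_le hw1).trans (by gcongr)

/-- If `|x_n| ≤ K n^{1/2 - ε}`, then `(1 + x_n/n)^n = exp(x_n)(1 + O(n^{-ε}))`,
i.e. there are `C > 0` and `N` such that for all `n ≥ N`,
`|(1 + x_n/n)^n - exp(x_n)| ≤ C n^{-ε} |exp(x_n)|`. -/
theorem taylor_one_add_pow (ε K : ℝ) (hε : 0 < ε) (hK : 0 < K) (x : ℕ → ℂ)
    (hx : ∀ n : ℕ, 1 ≤ n → ‖x n‖ ≤ K * (n : ℝ) ^ ((1 : ℝ) / 2 - ε)) :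
    ∃ C : ℝ, 0 < C ∧ ∃ N : ℕ, ∀ n : ℕ, N ≤ n →
      ‖(1 + x n / (n : ℂ)) ^ n - Complex.exp (x n)‖ ≤
        C * (n : ℝ) ^ (-ε) * ‖Complex.exp (x n)‖ := by
  have hlim : Tendsto (fun n : ℕ => K * (n : ℝ) ^ (-ε)) atTop (𝓝 0) := by
    simpa using ((tendsto_rpow_neg_atTop hε).comp tendsto_natCast_atTop_atTop).const_mul K
  obtain ⟨N, hN⟩ := eventually_atTop.1
    ((hlim.eventually_le_const (by norm_num : (0 : ℝ) < 1 / 2)).and (eventually_ge_atTop 1))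
  refine ⟨K, hK, N, fun n hn => ?_⟩
  obtain ⟨hsmall, hn1⟩ := hN n hn
  have hn1' : (1 : ℝ) ≤ n := by exact_mod_cast hn1
  have hn0 : (0 : ℝ) < n := by linarith
  set t : ℝ := K * (n : ℝ) ^ (-ε) with ht
  have ht0 : 0 ≤ t := by positivity
  have hxt : ‖x n‖ ≤ t * √n := by
    refine (hx n hn1).trans_eq ?_
    rw [sub_eq_add_neg, Real.rpow_add hn0, ← Real.sqrt_eq_rpow, ht]
    ring
  have hsq : √(n : ℝ) ^ 2 = n := Real.sq_sqrt hn0.le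
  have hsqrt : √(n : ℝ) ≤ n := Real.sqrt_le_iff.2 ⟨hn0.le, by nlinarith⟩
  have hxsq : ‖x n‖ ^ 2 ≤ t ^ 2 * n := by
    calc ‖x n‖ ^ 2 ≤ (t * √n) ^ 2 := by gcongr
      _ = t ^ 2 * n := by rw [mul_pow, hsq]
  have htsq : t ^ 2 ≤ t / 2 := by nlinarith
  refine (norm_one_add_div_pow_sub_exp_le (by lia) ?_ ?_).trans ?_
  · nlinarith [Real.sqrt_nonneg (n : ℝ)]
  · nlinarith
  · gcongr
    have := (div_le_iff₀ hn0).2 hxsq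
    linarith
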